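/- arXiv:2402.02538 — 5 statements merged into one kernel-verified Lean document; each statement's English description precedes it below -/
import Mathlib

section
/- For every integer n ≥ 4 and every i ∈ [n], |VPF_{n,(i)}| = |VPF_{n-1}| + (n−i)·|VPF_{n-2}| + Σ_{ℓ=i}^{n-2} (ℓ+1−i)·|VPF_{n-2,(ℓ)}|. -/
/-- One car with (1-indexed) preference `p` attempts to park on a one-way street with
spots `1,…,n` under the `k`-vacillating rule, given the set `occ` of occupied spots:
it parks in spot `p` if unoccupied; otherwise in spot `p - k` if `p - k ≥ 1` and it is
unoccupied; otherwise in spot `p + k` if `p + k ≤ n` and it is unoccupied; otherwise it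
fails to park (`none`). -/
def parkStep (n k : ℕ) (occ : Finset ℕ) (p : ℕ) : Option ℕ :=
  if p ∉ occ then some p
  else if k < p ∧ p - k ∉ occ then some (p - k)
  else if p + k ≤ n ∧ p + k ∉ occ then some (p + k)
  else none

/-- Park the cars whose preference list is given, in order, under the `k`-vacillating
rule on a street with spots `1,…,n`, starting from occupied set `occ`.  Returns the list
of spots occupied by the cars (in the order the cars arrive), or `none` if some car
fails to park. -/
def parkAssign (n k : ℕ) (occ : Finset ℕ) : List ℕ → Option (List ℕ)
  | [] => some []
  | p :: ps =>
    match parkStep n k occ p with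
    | none => none
    | some s => (parkAssign n k (insert s occ) ps).map (s :: ·)

/-- The 1-indexed preference list in `[n]^m` associated to `α : Fin m → Fin n`
(car `i+1` prefers spot `α i + 1`). -/
def prefList {m n : ℕ} (α : Fin m → Fin n) : List ℕ :=
  List.ofFn fun i => (α i : ℕ) + 1

/-- The set of `k`-vacillating parking functions of length `n`:
preference lists in `[n]^n` (encoded as `Fin n → Fin n`) for which all `n` cars park. -/
def VPFk (n k : ℕ) : Finset (Fin n → Fin n) :=
  Finset.univ.filter fun α => (parkAssign n k ∅ (prefList α)).isSome

/-- The set of vacillating parking functions of length `n` (the case `k = 1`). -/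
def VPF (n : ℕ) : Finset (Fin n → Fin n) := VPFk n 1

/-- The (1-indexed) spot occupied by the (1-indexed) car `i` when the cars with
preference list `α` park under the vacillating (`k = 1`) rule. -/
def spotOfCar (n : ℕ) (α : Fin n → Fin n) (i : ℕ) : Option ℕ :=
  (parkAssign n 1 ∅ (prefList α)).bind fun l => l[i-1]?

/-- The (1-indexed) preferred spot of the (1-indexed) car `i`. -/
def prefOfCar (n : ℕ) (α : Fin n → Fin n) (i : ℕ) : Option ℕ :=
  (prefList α)[i-1]?

/-- `VPF_{n,i}`: vacillating parking functions of length `n` in which spot `n` is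
occupied by car `i`. -/
def VPF_i (n i : ℕ) : Finset (Fin n → Fin n) :=
  (VPF n).filter fun α => spotOfCar n α i = some n

/-- `VPF_{n,(i)}`: vacillating parking functions of length `n` in which car `i`
prefers spot `n` and parks in spot `n`. -/
def VPF_paren (n i : ℕ) : Finset (Fin n → Fin n) :=
  (VPF n).filter fun α => prefOfCar n α i = some n ∧ spotOfCar n α i = some n

/-- `VPF_{n,[i]}`: vacillating parking functions of length `n` in which car `i`
prefers spot `n - 1` and parks in spot `n`. -/
def VPF_bracket (n i : ℕ) : Finset (Fin n → Fin n) :=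
  (VPF n).filter fun α => prefOfCar n α i = some (n-1) ∧ spotOfCar n α i = some n

/-- `g` records the spots taken by the cars with preferences `f` on an initially empty street
with spots `1,…,n`: each car `c` parks in spot `g c`, given the spots of the earlier cars. -/
def IsOutcome (n : ℕ) {k : ℕ} (f g : Fin k → ℕ) : Prop :=
  ∀ c, parkStep n 1 ((Finset.Iio c).image g) (f c) = some (g c)

theorem parkAssign_ofFn_eq_some_iff (n : ℕ) {k : ℕ} (f : Fin k → ℕ) (occ : Finset ℕ)
    (l : List ℕ) :
    parkAssign n 1 occ (List.ofFn f) = some l ↔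
      ∃ g : Fin k → ℕ, l = List.ofFn g ∧
        ∀ c, parkStep n 1 (occ ∪ (Finset.Iio c).image g) (f c) = some (g c) := by
  induction k generalizing occ l with
  | zero => simp [parkAssign, eq_comm]
  | succ k ih =>
    have image_Iio_succ (g : Fin (k + 1) → ℕ) (c : Fin k) :
        occ ∪ (Finset.Iio c.succ).image g =
          insert (g 0) occ ∪ (Finset.Iio c).image (fun d => g d.succ) := by
      ext q
      simp only [Finset.mem_union, Finset.mem_image, Finset.mem_Iio, Finset.mem_insert,
        Fin.exists_fin_succ, Fin.succ_lt_succ_iff, Fin.succ_pos, true_and]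
      grind
    have Iio_zero : Finset.Iio (0 : Fin (k + 1)) = ∅ := Finset.Iio_bot
    rw [List.ofFn_succ, parkAssign]
    constructor
    · intro h
      cases hs : parkStep n 1 occ (f 0) with
      | none => simp [hs] at h
      | some s =>
        simp only [hs, Option.map_eq_some_iff] at h
        obtain ⟨l', hl', rfl⟩ := h
        obtain ⟨g, rfl, hg⟩ := (ih _ _ _).1 hl'
        refine ⟨Fin.cons s g, by simp [List.ofFn_succ], fun c => ?_⟩
        refine Fin.cases ?_ (fun c => ?_) c
        · simpa [Iio_zero] using hs
        · rw [image_Iio_succ]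
          simpa using hg c
    · rintro ⟨g, rfl, hg⟩
      have h0 : parkStep n 1 occ (f 0) = some (g 0) := by
        simpa [Iio_zero] using hg 0
      simp only [h0, Option.map_eq_some_iff]
      refine ⟨List.ofFn fun d => g d.succ, (ih _ _ _).2 ⟨_, rfl, fun c => ?_⟩, ?_⟩
      · rw [← image_Iio_succ]
        exact hg c.succ
      · simp [List.ofFn_succ]

theorem parkAssign_prefList_eq_some_iff {n : ℕ} (α : Fin n → Fin n) (l : List ℕ) :
    parkAssign n 1 ∅ (prefList α) = some l ↔
      ∃ g : Fin n → ℕ, l = List.ofFn g ∧ IsOutcome n (fun c => (α c : ℕ) + 1) g := by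
  simp [prefList, parkAssign_ofFn_eq_some_iff, IsOutcome]

theorem mem_VPF_iff {n : ℕ} (α : Fin n → Fin n) :
    α ∈ VPF n ↔ ∃ g : Fin n → ℕ, IsOutcome n (fun c => (α c : ℕ) + 1) g := by
  simp only [VPF, VPFk, Finset.mem_filter, Finset.mem_univ, true_and, Option.isSome_iff_exists,
    parkAssign_prefList_eq_some_iff]
  grind

theorem mem_VPF_paren_succ_iff {n : ℕ} (α : Fin n → Fin n) (p : Fin n) :
    α ∈ VPF_paren n (p + 1) ↔
      ∃ g : Fin n → ℕ, IsOutcome n (fun c => (α c : ℕ) + 1) g ∧ (α p : ℕ) + 1 = n ∧ g p = n := by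
  have hpref : prefOfCar n α (p + 1) = some ((α p : ℕ) + 1) := by
    simp [prefOfCar, prefList]
  rw [VPF_paren, Finset.mem_filter]
  simp only [hpref, Option.some_inj, spotOfCar, Option.bind_eq_some_iff, parkAssign_prefList_eq_some_iff, mem_VPF_iff]
  constructor
  · rintro ⟨-, hα, _, ⟨g, rfl, hg⟩, hgp⟩
    exact ⟨g, hg, hα, by simpa using hgp⟩
  · rintro ⟨g, hg, hα, hgp⟩
    exact ⟨⟨g, hg⟩, hα, _, ⟨g, rfl, hg⟩, by simpa using hgp⟩

namespace IsOutcome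

variable {n k : ℕ} {f g : Fin k → ℕ}

theorem ne_of_lt (h : IsOutcome n f g) {c d : Fin k} (hcd : c < d) : g c ≠ g d := by
  have hd := h d
  have hmem : g c ∈ (Finset.Iio d).image g :=
    Finset.mem_image_of_mem g (Finset.mem_Iio.2 hcd)
  unfold parkStep at hd
  grind

theorem injective (h : IsOutcome n f g) : Function.Injective g := by
  intro c d hcd
  by_contra hne
  rcases lt_or_gt_of_ne hne with hlt | hlt
  · exact h.ne_of_lt hlt hcd
  · exact h.ne_of_lt hlt hcd.symm

theorem le (h : IsOutcome n f g) (hf : ∀ c, f c ≤ n) (c : Fin k) : g c ≤ n := by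
  have hc := h c
  have := hf c
  unfold parkStep at hc
  grind

end IsOutcome

theorem mem_image_insertNth_Iio_succAbove {m : ℕ} (p : Fin (m + 1)) (g : Fin m → ℕ) (s : ℕ)
    (c : Fin m) (q : ℕ) :
    q ∈ (Finset.Iio (p.succAbove c)).image (p.insertNth s g : Fin (m + 1) → ℕ) ↔
      q ∈ (Finset.Iio c).image g ∨ (q = s ∧ p ≤ c.castSucc) := by
  simp only [Finset.mem_image, Finset.mem_Iio, Fin.exists_iff_succAbove p, Fin.insertNth_apply_same,
    Fin.insertNth_apply_succAbove, Fin.succAbove_lt_succAbove_iff,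
    Fin.lt_succAbove_iff_le_castSucc]
  grind

/-- Insert a car preferring the new last spot at position `p`; if `o = some j`, also redirect
car `j` to the new last spot. -/
def insertLast {m : ℕ} (p : Fin (m + 1)) (o : Option (Fin m)) (β : Fin m → Fin m) :
    Fin (m + 1) → Fin (m + 1) :=
  p.insertNth (Fin.last m) fun c => if some c = o then Fin.last m else (β c).castSucc

theorem isOutcome_insertLast_iff {m : ℕ} (hm : 1 ≤ m) (p : Fin (m + 1)) (o : Option (Fin m))
    (β : Fin m → Fin m) (hβ : ∀ j, some j = o → (β j : ℕ) + 1 = m) (g : Fin m → ℕ)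
    (hg : ∀ c, g c ≤ m) :
    IsOutcome (m + 1) (fun c => (insertLast p o β c : ℕ) + 1) (p.insertNth (m + 1) g) ↔
      IsOutcome m (fun c => (β c : ℕ) + 1) g ∧ ∀ j, some j = o → g j = m ∧ p ≤ j.castSucc := by
  have htop (c : Fin m) : m + 1 ∉ (Finset.Iio c).image g := by
    simp only [Finset.mem_image, not_exists, not_and]
    intro d _ hd
    have := hg d
    omega
  have hp : parkStep (m + 1) 1 ((Finset.Iio p).image (p.insertNth (m + 1) g : Fin (m + 1) → ℕ))
      (m + 1) = some (m + 1) := by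
    have : m + 1 ∉ (Finset.Iio p).image (p.insertNth (m + 1) g : Fin (m + 1) → ℕ) := by
      simp only [Finset.mem_image, Finset.mem_Iio, Fin.exists_iff_succAbove p,
        Fin.insertNth_apply_same, Fin.insertNth_apply_succAbove, lt_irrefl, false_and, false_or,
        not_exists, not_and]
      intro d _ hd
      have := hg d
      omega
    simp [parkStep, this]
  have hstep (c : Fin m) :
      parkStep (m + 1) 1
          ((Finset.Iio (p.succAbove c)).image (p.insertNth (m + 1) g : Fin (m + 1) → ℕ))
          ((insertLast p o β (p.succAbove c) : ℕ) + 1) = some (g c) ↔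
        parkStep m 1 ((Finset.Iio c).image g) ((β c : ℕ) + 1) = some (g c) ∧
          (some c = o → g c = m ∧ p ≤ c.castSucc) := by
    have hocc := mem_image_insertNth_Iio_succAbove p g (m + 1) c
    have hgc := hg c
    have hβc := hβ c
    have hlt := (β c).isLt
    have htopc := htop c
    generalize (Finset.Iio (p.succAbove c)).image (p.insertNth (m + 1) g : Fin (m + 1) → ℕ) = occ'
      at hocc ⊢
    generalize (Finset.Iio c).image g = occ at hocc htopc ⊢
    simp only [insertLast, Fin.insertNth_apply_succAbove]
    by_cases hc : some c = o
    · have hβm := hβc hc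
      simp only [hc, if_true, Fin.val_last, hβm, forall_const]
      unfold parkStep
      grind
    · simp only [hc, if_false, Fin.val_castSucc, false_implies, and_true]
      unfold parkStep
      grind
  unfold IsOutcome
  rw [Fin.forall_iff_succAbove p]
  simp only [Fin.insertNth_apply_succAbove, Fin.insertNth_apply_same, hstep]
  simp only [insertLast, Fin.insertNth_apply_same, Fin.val_last, hp, true_and, forall_and]

/-- The preference lists of length `m` from which `insertLast p o` produces elements of
`VPF_paren (m + 1) (p + 1)`. -/
def insertLastDomain {m : ℕ} (p : Fin (m + 1)) : Option (Fin m) → Finset (Fin m → Fin m)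
  | none => VPF m
  | some j => if p ≤ j.castSucc then VPF_paren m (j + 1) else ∅

theorem mem_insertLastDomain_iff {m : ℕ} (p : Fin (m + 1)) (o : Option (Fin m))
    (β : Fin m → Fin m) :
    β ∈ insertLastDomain p o ↔
      ∃ g : Fin m → ℕ, IsOutcome m (fun c => (β c : ℕ) + 1) g ∧
        ∀ j, some j = o → (β j : ℕ) + 1 = m ∧ g j = m ∧ p ≤ j.castSucc := by
  cases o with
  | none => simp [insertLastDomain, mem_VPF_iff]
  | some j =>
    by_cases h : p ≤ j.castSucc <;> simp [insertLastDomain, mem_VPF_paren_succ_iff, h]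

theorem insertLast_injective {m : ℕ} (p : Fin (m + 1)) {o o' : Option (Fin m)}
    {β β' : Fin m → Fin m} (hβ : β ∈ insertLastDomain p o) (hβ' : β' ∈ insertLastDomain p o')
    (h : insertLast p o β = insertLast p o' β') : o = o' ∧ β = β' := by
  rw [mem_insertLastDomain_iff] at hβ hβ'
  obtain ⟨g, -, hg⟩ := hβ
  obtain ⟨g', -, hg'⟩ := hβ'
  have hc (c : Fin m) : (some c = o ↔ some c = o') ∧ β c = β' c := by
    have := congrFun h (p.succAbove c)
    have hne := (Fin.castSucc_lt_last (β c)).ne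
    have hne' := (Fin.castSucc_lt_last (β' c)).ne
    simp only [insertLast, Fin.insertNth_apply_succAbove] at this
    have hgc := hg c
    have hgc' := hg' c
    split_ifs at this with h1 h2 h2
    · exact ⟨iff_of_true h1 h2, Fin.ext (by have := hgc h1; have := hgc' h2; omega)⟩
    · exact absurd this.symm hne'
    · exact absurd this hne
    · exact ⟨by simp [h1, h2], Fin.castSucc_injective m this⟩
  refine ⟨Option.ext fun c => ?_, funext fun c => (hc c).2⟩
  simpa [eq_comm] using (hc c).1

theorem insertLast_mem_VPF_paren {m : ℕ} (hm : 1 ≤ m) (p : Fin (m + 1)) {o : Option (Fin m)}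
    {β : Fin m → Fin m} (hβ : β ∈ insertLastDomain p o) :
    insertLast p o β ∈ VPF_paren (m + 1) (p + 1) := by
  rw [mem_insertLastDomain_iff] at hβ
  obtain ⟨g, hg, ho⟩ := hβ
  rw [mem_VPF_paren_succ_iff]
  refine ⟨p.insertNth (m + 1) g, ?_, by simp [insertLast], by simp⟩
  exact (isOutcome_insertLast_iff hm p o β (fun j hj => (ho j hj).1) g
    (hg.le fun c => (β c).isLt)).2 ⟨hg, fun j hj => (ho j hj).2⟩

theorem exists_insertLast_eq {m : ℕ} (hm : 1 ≤ m) (p : Fin (m + 1))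
    {α : Fin (m + 1) → Fin (m + 1)} (hα : α ∈ VPF_paren (m + 1) (p + 1)) :
    ∃ o, ∃ β ∈ insertLastDomain p o, insertLast p o β = α := by
  rw [mem_VPF_paren_succ_iff] at hα
  obtain ⟨γ, hγ, hαp, hγp⟩ := hα
  have hle := hγ.le fun c => (α c).isLt
  have hne (c : Fin m) : γ (p.succAbove c) ≠ m + 1 := fun h =>
    Fin.succAbove_ne p c (hγ.injective (h.trans hγp.symm))
  have hlast (c : Fin m) (hc : α (p.succAbove c) = Fin.last m) : γ (p.succAbove c) = m := by
    have h := hγ (p.succAbove c)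
    have := hne c
    simp only [hc, Fin.val_last] at h
    unfold parkStep at h
    grind
  obtain ⟨o, ho⟩ : ∃ o : Option (Fin m), ∀ c, some c = o ↔ α (p.succAbove c) = Fin.last m := by
    by_cases h : ∃ j, α (p.succAbove j) = Fin.last m
    · obtain ⟨j, hj⟩ := h
      refine ⟨some j, fun c => ⟨fun hc => by simpa [Option.some_inj.1 hc] using hj, fun hc => ?_⟩⟩
      rw [Fin.succAbove_right_injective (hγ.injective ((hlast c hc).trans (hlast j hj).symm))]
    · exact ⟨none, fun c => by simpa using fun hc => h ⟨c, hc⟩⟩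
  let β : Fin m → Fin m := fun c => ⟨min (α (p.succAbove c)) (m - 1), by omega⟩
  have hβ (j : Fin m) (hj : some j = o) : (β j : ℕ) + 1 = m := by
    simp only [β, (ho j).1 hj, Fin.val_last]
    omega
  have hins : insertLast p o β = α := by
    funext c
    refine Fin.succAboveCases p ?_ (fun c => ?_) c
    · simp only [insertLast, Fin.insertNth_apply_same]
      exact Fin.ext (by simpa using hαp.symm)
    · simp only [insertLast, Fin.insertNth_apply_succAbove, ho]
      split_ifs with hc
      · exact hc.symm
      · have := Fin.val_lt_last hc
        exact Fin.ext (by simp only [β, Fin.val_castSucc]; omega)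
  have hγ' : p.insertNth (m + 1) (fun c => γ (p.succAbove c)) = γ :=
    Fin.insertNth_eq_iff.2 ⟨hγp.symm, rfl⟩
  have hle' (c : Fin m) : γ (p.succAbove c) ≤ m := by
    have := hle (p.succAbove c)
    have := hne c
    omega
  have key := (isOutcome_insertLast_iff hm p o β hβ (fun c => γ (p.succAbove c)) hle').1
    (by rw [hins, hγ']; exact hγ)
  exact ⟨o, β, (mem_insertLastDomain_iff p o β).2
    ⟨_, key.1, fun j hj => ⟨hβ j hj, key.2 j hj⟩⟩, hins⟩

theorem card_VPF_paren_succ_fin {m : ℕ} (hm : 1 ≤ m) (p : Fin (m + 1)) :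
    (VPF_paren (m + 1) (p + 1)).card =
      (VPF m).card + ∑ j : Fin m, if p ≤ j.castSucc then (VPF_paren m (j + 1)).card else 0 := by
  have hbij : (Finset.univ.sigma (insertLastDomain p)).card =
      (VPF_paren (m + 1) (p + 1)).card := by
    refine Finset.card_bij (fun x _ => insertLast p x.1 x.2) ?_ ?_ ?_
    · rintro ⟨o, β⟩ h
      exact insertLast_mem_VPF_paren hm p (Finset.mem_sigma.1 h).2
    · rintro ⟨o, β⟩ h ⟨o', β'⟩ h' heq
      obtain ⟨rfl, rfl⟩ :=
        insertLast_injective p (Finset.mem_sigma.1 h).2 (Finset.mem_sigma.1 h').2 heq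
      rfl
    · intro α hα
      obtain ⟨o, β, hβ, rfl⟩ := exists_insertLast_eq hm p hα
      exact ⟨⟨o, β⟩, by simpa using hβ, rfl⟩
  rw [← hbij, Finset.card_sigma, Fintype.sum_option]
  simp only [insertLastDomain, apply_ite Finset.card, Finset.card_empty]

/-- Removing the car that parks in the last spot. -/
theorem card_VPF_paren_succ {m i : ℕ} (hm : 1 ≤ m) (hi : 1 ≤ i) (him : i ≤ m + 1) :
    (VPF_paren (m + 1) i).card =
      (VPF m).card + ∑ j ∈ Finset.Icc i m, (VPF_paren m j).card := by
  have h := card_VPF_paren_succ_fin hm ⟨i - 1, by omega⟩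
  rw [Nat.sub_add_cancel hi] at h
  simp only [Fin.le_def, Fin.val_castSucc] at h
  rw [h, Fin.sum_univ_eq_sum_range (fun j => if i - 1 ≤ j then (VPF_paren m (j + 1)).card else 0),
    ← Finset.sum_filter]
  congr 1
  refine Finset.sum_bij (fun j _ => j + 1) ?_ ?_ ?_ (fun _ _ => rfl)
  · intro j hj
    simp only [Finset.mem_filter, Finset.mem_range, Finset.mem_Icc] at hj ⊢
    omega
  · intro a _ b _ hab
    omega
  · intro b hb
    simp only [Finset.mem_Icc] at hb
    exact ⟨b - 1, by simp only [Finset.mem_filter, Finset.mem_range]; omega, by omega⟩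

/-- For every `n ≥ 4` and `i ∈ [n]`,
`|VPF_{n,(i)}| = |VPF_{n-1}| + (n-i)·|VPF_{n-2}| + ∑_{ℓ=i}^{n-2} (ℓ+1-i)·|VPF_{n-2,(ℓ)}|`. -/
theorem vpf_paren_card_eq (n : ℕ) (hn : 4 ≤ n) (i : ℕ) (hi : i ∈ Finset.Icc 1 n) :
    (VPF_paren n i).card =
      (VPF (n-1)).card + (n - i) * (VPF (n-2)).card
        + ∑ ℓ ∈ Finset.Icc i (n-2), (ℓ + 1 - i) * (VPF_paren (n-2) ℓ).card := by
  obtain ⟨m, rfl⟩ : ∃ m, n = m + 2 := ⟨n - 2, by omega⟩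
  obtain ⟨hi1, hin⟩ := Finset.mem_Icc.1 hi
  have hsum : ∑ j ∈ Finset.Icc i (m + 1), (VPF_paren (m + 1) j).card =
      ∑ j ∈ Finset.Icc i (m + 1),
        ((VPF m).card + ∑ ℓ ∈ Finset.Icc j m, (VPF_paren m ℓ).card) := by
    refine Finset.sum_congr rfl fun j hj => ?_
    obtain ⟨hij, hjm⟩ := Finset.mem_Icc.1 hj
    exact card_VPF_paren_succ (by omega) (by omega) hjm
  have hswap : ∑ j ∈ Finset.Icc i (m + 1), ∑ ℓ ∈ Finset.Icc j m, (VPF_paren m ℓ).card =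
      ∑ ℓ ∈ Finset.Icc i m, ∑ _j ∈ Finset.Icc i ℓ, (VPF_paren m ℓ).card := by
    refine Finset.sum_comm' fun j ℓ => ?_
    simp only [Finset.mem_Icc]
    omega
  rw [card_VPF_paren_succ (by omega) hi1 hin, hsum, Finset.sum_add_distrib, hswap]
  simp only [Finset.sum_const, Nat.card_Icc, smul_eq_mul]
  rw [show m + 2 - 1 = m + 1 by omega, show m + 2 - 2 = m by omega,
    show m + 1 + 1 - i = m + 2 - i by omega, add_assoc]
end

section
/- If α = (a_1,…,a_n) is a non-decreasing vacillating parking function of length n (i.e., α ∈ VPF_n and a_1 ≤ a_2 ≤ ⋯ ≤ a_n), then i−1 ≤ a_i ≤ i+1 for all i ∈ [n]. -/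
/-- The set of non-decreasing vacillating parking functions of length `n`. -/
def VPFup (n : ℕ) : Finset (Fin n → Fin n) :=
  (VPF n).filter fun α => ∀ i j : Fin n, i ≤ j → α i ≤ α j

/-- A car that parks takes a free spot of the street at distance at most `k` from its
preference. -/
lemma parkStep_eq_some {n k p s : ℕ} {occ : Finset ℕ} (hp : p ∈ Finset.Icc 1 n)
    (h : parkStep n k occ p = some s) :
    s ∉ occ ∧ s ∈ Finset.Icc 1 n ∧ s ≤ p + k ∧ p ≤ s + k := by
  rw [Finset.mem_Icc] at hp ⊢
  unfold parkStep at h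
  split_ifs at h with h₁ h₂ h₃ <;> obtain rfl := Option.some.inj h
  · exact ⟨h₂.2, by omega, by omega, by omega⟩
  · exact ⟨h₃.2, by omega, by omega, by omega⟩
  · exact ⟨h₁, hp, by omega, by omega⟩

/-- When all cars park, they take distinct free spots of the street, each at distance at most
`k` from the corresponding preference. -/
lemma parkAssign_eq_some {n k : ℕ} {ps l : List ℕ} {occ : Finset ℕ}
    (hps : ∀ p ∈ ps, p ∈ Finset.Icc 1 n) (h : parkAssign n k occ ps = some l) :
    l.Nodup ∧ (∀ s ∈ l, s ∉ occ) ∧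
      List.Forall₂ (fun p s => s ∈ Finset.Icc 1 n ∧ s ≤ p + k ∧ p ≤ s + k) ps l := by
  induction ps generalizing occ l with
  | nil =>
    obtain rfl := Option.some.inj h
    simp
  | cons p ps ih =>
    cases hs : parkStep n k occ p with
    | none => simp [parkAssign, hs] at h
    | some s =>
      simp only [parkAssign, hs, Option.map_eq_some_iff] at h
      obtain ⟨l', hl', rfl⟩ := h
      obtain ⟨hnodup, hfree, hnear⟩ := ih (fun q hq => hps q (List.mem_cons_of_mem _ hq)) hl'
      obtain ⟨hs_free, hs_near⟩ := parkStep_eq_some (hps p List.mem_cons_self) hs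
      refine ⟨List.nodup_cons.2 ⟨fun hmem => hfree s hmem (Finset.mem_insert_self s occ), hnodup⟩,
        ?_, List.Forall₂.cons hs_near hnear⟩
      intro t ht
      rcases List.mem_cons.1 ht with rfl | ht
      · exact hs_free
      · exact fun hocc => hfree t ht (Finset.mem_insert_of_mem hocc)

/-- The cars of a vacillating parking function park injectively, each at distance at most one
from its preference. -/
lemma exists_injective_spot_of_mem_VPF {n : ℕ} {α : Fin n → Fin n} (hα : α ∈ VPF n) :
    ∃ s : Fin n → ℕ, Function.Injective s ∧ ∀ i, s i ∈ Finset.Icc 1 n ∧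
      s i ≤ (α i : ℕ) + 2 ∧ (α i : ℕ) ≤ s i := by
  simp only [VPF, VPFk, Finset.mem_filter, Finset.mem_univ, true_and] at hα
  obtain ⟨l, hl⟩ := Option.isSome_iff_exists.1 hα
  have hpref : ∀ p ∈ prefList α, p ∈ Finset.Icc 1 n := by
    intro p hp
    obtain ⟨i, rfl⟩ := (List.mem_ofFn' _ _).1 hp
    exact Finset.mem_Icc.2 ⟨Nat.succ_pos _, (α i).isLt⟩
  obtain ⟨hnodup, -, hnear⟩ := parkAssign_eq_some hpref hl
  have hlen : l.length = n := by simpa [prefList] using hnear.length_eq.symm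
  refine ⟨fun i => l.get (i.cast hlen.symm), ?_, fun i => ?_⟩
  · exact (List.nodup_iff_injective_get.1 hnodup).comp (Fin.cast_injective _)
  · have h := hnear.get (i := i) (by simp [prefList]) (by omega)
    simp only [prefList, List.get_eq_getElem, List.getElem_ofFn] at h
    refine ⟨h.1, h.2.1, ?_⟩
    exact Nat.le_of_succ_le_succ h.2.2

/-- If `α` is a non-decreasing vacillating parking function of
length `n`, then `i − 1 ≤ a_i ≤ i + 1` for all `i ∈ [n]`.  Here car `i ∈ [n]`
corresponds to index `i - 1 : Fin n` and its (1-indexed) preference is `α (i-1) + 1`,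
so the claim reads `(i : ℕ) ≤ (α i : ℕ) + 1 ≤ (i : ℕ) + 2` for `i : Fin n`. -/
theorem nondecreasing_vpf_bounds (n : ℕ) (α : Fin n → Fin n) (hα : α ∈ VPF n)
    (hmono : ∀ i j : Fin n, i ≤ j → α i ≤ α j) :
    ∀ i : Fin n, (i : ℕ) ≤ (α i : ℕ) + 1 ∧ (α i : ℕ) + 1 ≤ (i : ℕ) + 2 := by
  intro i
  obtain ⟨s, hinj, hs⟩ := exists_injective_spot_of_mem_VPF hα
  simp only [Finset.mem_Icc] at hs
  constructor
  · have hcard := Finset.card_le_card_of_injOn (s := Finset.Iic i)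
      (t := Finset.Icc 1 ((α i : ℕ) + 2)) s
      (fun j hj => by
        have hji : (α j : ℕ) ≤ α i := hmono j i (Finset.mem_Iic.1 hj)
        have := hs j
        exact Finset.mem_Icc.2 (by omega))
      hinj.injOn
    rw [Fin.card_Iic, Nat.card_Icc] at hcard
    omega
  · have hcard := Finset.card_le_card_of_injOn (s := Finset.Ici i)
      (t := Finset.Icc (α i : ℕ) n) s
      (fun j hj => by
        have hij : (α i : ℕ) ≤ α j := hmono i j (Finset.mem_Ici.1 hj)
        have := hs j
        exact Finset.mem_Icc.2 (by omega))
      hinj.injOn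
    rw [Fin.card_Ici, Nat.card_Icc] at hcard
    omega
end

section
/- Let VPF_n^↑ denote the set of non-decreasing vacillating parking functions of length n. Then |VPF_1^↑| = 1, |VPF_2^↑| = 3, and for every integer n ≥ 3, |VPF_n^↑| = 2·|VPF_{n-1}^↑| + |VPF_{n-2}^↑|. -/
/-- The non-decreasing lists of preferences that fill the spots `m+1,…,n` of a street whose
spots `1,…,m` are occupied, every preference being at least `m`. -/
def FillsFrom (n m : ℕ) (l : List ℕ) : Prop :=
  l.length + m = n ∧ l.Pairwise (· ≤ ·) ∧ (∀ x ∈ l, 1 ≤ x ∧ m ≤ x ∧ x ≤ n) ∧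
    (parkAssign n 1 (Finset.Icc 1 m) l).isSome

theorem parkAssign_cons_isSome {n k : ℕ} {occ : Finset ℕ} {p : ℕ} {l : List ℕ} :
    (parkAssign n k occ (p :: l)).isSome ↔
      ∃ s, parkStep n k occ p = some s ∧ (parkAssign n k (insert s occ) l).isSome := by
  cases h : parkStep n k occ p <;> simp [parkAssign, h]

theorem parkStep_mem {n a p s : ℕ} {occ : Finset ℕ} (hap : a + 1 ≤ p) (hpn : p ≤ n)
    (h : parkStep n 1 occ p = some s) : s ∈ Finset.Icc a n \ occ := by
  simp only [Finset.mem_sdiff, Finset.mem_Icc]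
  unfold parkStep at h
  split_ifs at h <;> simp only [Option.some.injEq] at h <;> subst h
  all_goals grind

/-- Cars preferring spots beyond `a` park in distinct free spots of `[a, n]`. -/
theorem length_le_card_of_parkAssign {n a : ℕ} (l : List ℕ) (occ : Finset ℕ)
    (hl : ∀ x ∈ l, a + 1 ≤ x ∧ x ≤ n) (h : (parkAssign n 1 occ l).isSome) :
    l.length ≤ (Finset.Icc a n \ occ).card := by
  induction l generalizing occ with
  | nil => simp
  | cons p l ih =>
    obtain ⟨s, hs, h⟩ := parkAssign_cons_isSome.1 h
    have hp := hl p (by simp)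
    have hmem := parkStep_mem hp.1 hp.2 hs
    have := ih _ (fun x hx => hl x (by simp [hx])) h
    rw [Finset.sdiff_insert, Finset.card_erase_of_mem hmem] at this
    have := Finset.card_pos.2 ⟨s, hmem⟩
    rw [List.length_cons]
    omega

theorem parkStep_Icc_last {n m : ℕ} (hm : 1 ≤ m) (hn : m + 1 ≤ n) :
    parkStep n 1 (Finset.Icc 1 m) m = some (m + 1) := by
  have h₁ : m ∈ Finset.Icc 1 m := by simp; omega
  have h₂ : ¬ (1 < m ∧ m - 1 ∉ Finset.Icc 1 m) := by simp; omega
  have h₃ : m + 1 ∉ Finset.Icc 1 m := by simp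
  rw [parkStep, if_neg (not_not.2 h₁), if_neg h₂, if_pos ⟨hn, h₃⟩]

theorem parkStep_of_notMem {n k p : ℕ} {occ : Finset ℕ} (h : p ∉ occ) :
    parkStep n k occ p = some p := by
  simp [parkStep, h]

theorem insert_succ_Icc (m : ℕ) : insert (m + 1) (Finset.Icc 1 m) = Finset.Icc 1 (m + 1) := by
  ext x; simp; omega

theorem insert_insert_Icc (m : ℕ) :
    insert (m + 1) (insert (m + 2) (Finset.Icc 1 m)) = Finset.Icc 1 (m + 2) := by
  ext x; simp; omega

theorem parkStep_second_of_pair (n m : ℕ) :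
    parkStep n 1 (insert (m + 2) (Finset.Icc 1 m)) (m + 2) = some (m + 1) := by
  simp [parkStep]

/-- After the block `1,…,m+1` is filled, no further car may prefer spot `m`. -/
theorem parkAssign_cons_interior {n m : ℕ} {l : List ℕ} (hm : 1 ≤ m) :
    ¬ (parkAssign n 1 (Finset.Icc 1 (m + 1)) (m :: l)).isSome := by
  rw [parkAssign_cons_isSome]
  rintro ⟨s, hs, -⟩
  unfold parkStep at hs
  simp only [Finset.mem_Icc] at hs
  split_ifs at hs <;> omega

theorem fillsFrom_cons {n m p : ℕ} {l : List ℕ} :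
    FillsFrom n m (p :: l) ↔
      (1 ≤ m ∧ p = m ∧ FillsFrom n (m + 1) l) ∨ (p = m + 1 ∧ FillsFrom n (m + 1) l) ∨
        (p = m + 2 ∧ ∃ l', l = (m + 2) :: l' ∧ FillsFrom n (m + 2) l') := by
  constructor
  · rintro ⟨hlen, hsort, hbd, hpark⟩
    have hp := hbd p (by simp)
    rw [List.pairwise_cons] at hsort
    obtain ⟨hpl, hsort⟩ := hsort
    have hbd' : ∀ x ∈ l, x ≤ n := fun x hx => (hbd x (by simp [hx])).2.2
    simp only [List.length_cons] at hlen
    obtain rfl | hpm := eq_or_ne p m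
    · refine Or.inl ⟨hp.1, rfl, by omega, hsort, ?_, ?_⟩
      all_goals
        obtain ⟨s, hs, hpark⟩ := parkAssign_cons_isSome.1 hpark
        rw [parkStep_Icc_last hp.1 (by omega), Option.some.injEq] at hs
        rw [← hs, insert_succ_Icc] at hpark
      · cases l with
        | nil => simp
        | cons q l =>
          have hq : q ≠ p := by
            rintro rfl
            exact parkAssign_cons_interior hp.1 hpark
          have := hpl q (by simp)
          rw [List.pairwise_cons] at hsort
          intro x hx
          have := hbd' x hx
          rcases List.mem_cons.1 hx with rfl | hx
          · omega
          · have := hsort.1 x hx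
            omega
      · exact hpark
    have hstep : parkStep n 1 (Finset.Icc 1 m) p = some p :=
      parkStep_of_notMem (by simp; omega)
    have hpark₀ := hpark
    rw [parkAssign_cons_isSome] at hpark
    simp only [hstep, Option.some.injEq, exists_eq_left'] at hpark
    obtain rfl | hpm₁ := eq_or_ne p (m + 1)
    · refine Or.inr (Or.inl ⟨rfl, by omega, hsort, ?_, by rwa [insert_succ_Icc] at hpark⟩)
      intro x hx
      have := hpl x hx
      have := hbd' x hx
      omega
    obtain rfl | hpm₂ := eq_or_ne p (m + 2)
    · refine Or.inr (Or.inr ⟨rfl, ?_⟩)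
      cases l with
      | nil => simp at hlen; omega
      | cons q l =>
        rw [List.pairwise_cons] at hsort
        obtain rfl | hq := eq_or_ne q (m + 2)
        · rw [parkAssign_cons_isSome] at hpark
          simp only [parkStep_second_of_pair, Option.some.injEq, exists_eq_left',
            insert_insert_Icc] at hpark
          simp only [List.length_cons] at hlen
          refine ⟨l, rfl, by omega, hsort.2, ?_, hpark⟩
          intro x hx
          have := hsort.1 x hx
          have := hbd' x (by simp [hx])
          omega
        · exfalso
          have hq' := hpl q (by simp)
          have h := length_le_card_of_parkAssign (a := m + 2) _ _ ?_ hpark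
          · have hsub : Finset.Icc (m + 2) n \ insert (m + 2) (Finset.Icc 1 m) ⊆
                Finset.Icc (m + 3) n := by
              intro x; simp; omega
            have := Finset.card_le_card hsub
            simp only [Nat.card_Icc, List.length_cons] at this h hlen
            omega
          · intro x hx
            refine ⟨?_, hbd' x hx⟩
            rcases List.mem_cons.1 hx with rfl | hx
            · omega
            · have := hsort.1 x hx
              omega
    · exfalso
      have h := length_le_card_of_parkAssign (a := m + 2) _ _ ?_ hpark₀
      · have := Finset.card_le_card
          (Finset.sdiff_subset (s := Finset.Icc (m + 2) n) (t := Finset.Icc 1 m))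
        simp only [Nat.card_Icc, List.length_cons] at this h
        omega
      · intro x hx
        refine ⟨?_, (hbd x hx).2.2⟩
        rcases List.mem_cons.1 hx with rfl | hx
        · omega
        · have := hpl x hx
          omega
  · rintro (⟨hm, rfl, hlen, hsort, hbd, hpark⟩ | ⟨rfl, hlen, hsort, hbd, hpark⟩ |
      ⟨rfl, l, rfl, hlen, hsort, hbd, hpark⟩)
    · refine ⟨by simp; omega, ?_, ?_, ?_⟩
      · exact List.pairwise_cons.2 ⟨fun x hx => by have := hbd x hx; omega, hsort⟩
      · intro x hx
        rcases List.mem_cons.1 hx with rfl | hx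
        · omega
        · have := hbd x hx
          omega
      · rw [parkAssign_cons_isSome]
        exact ⟨_, parkStep_Icc_last hm (by omega), by rwa [insert_succ_Icc]⟩
    · refine ⟨by simp; omega, ?_, ?_, ?_⟩
      · exact List.pairwise_cons.2 ⟨fun x hx => by have := hbd x hx; omega, hsort⟩
      · intro x hx
        rcases List.mem_cons.1 hx with rfl | hx
        · omega
        · have := hbd x hx
          omega
      · rw [parkAssign_cons_isSome]
        exact ⟨_, parkStep_of_notMem (by simp), by rwa [insert_succ_Icc]⟩
    · refine ⟨by simp; omega, ?_, ?_, ?_⟩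
      · simp only [List.pairwise_cons, List.mem_cons]
        refine ⟨?_, fun x hx => (hbd x hx).2.1, hsort⟩
        rintro x (rfl | hx)
        · rfl
        · exact (hbd x hx).2.1
      · intro x hx
        simp only [List.mem_cons] at hx
        rcases hx with rfl | rfl | hx
        · omega
        · omega
        · have := hbd x hx
          omega
      · rw [parkAssign_cons_isSome]
        refine ⟨_, parkStep_of_notMem (by simp), ?_⟩
        rw [parkAssign_cons_isSome]
        exact ⟨_, parkStep_second_of_pair n m, by rwa [insert_insert_Icc]⟩

theorem fillsFrom_nil {n m : ℕ} : FillsFrom n m [] ↔ m = n := by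
  simp [FillsFrom, parkAssign]

/-- The lists of length `r` satisfying `FillsFrom (m + r) m`. -/
def fillingLists : ℕ → ℕ → Finset (List ℕ)
  | 0, _ => {[]}
  | 1, m => (if 1 ≤ m then {[m]} else ∅) ∪ {[m + 1]}
  | r + 2, m =>
    (if 1 ≤ m then (fillingLists (r + 1) (m + 1)).image (m :: ·) else ∅) ∪
      ((fillingLists (r + 1) (m + 1)).image ((m + 1) :: ·) ∪
        (fillingLists r (m + 2)).image ((m + 2) :: (m + 2) :: ·))

theorem mem_fillingLists (r m : ℕ) (l : List ℕ) :
    l ∈ fillingLists r m ↔ FillsFrom (m + r) m l := by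
  induction r using Nat.strong_induction_on generalizing m l with
  | _ r ih =>
  match r, l with
  | 0, [] => simp [fillingLists, fillsFrom_nil]
  | 0, p :: l => simp [fillingLists, FillsFrom]
  | r + 1, [] =>
    rw [fillsFrom_nil]
    cases r <;> simp only [fillingLists] <;> split_ifs <;> simp
  | 1, p :: l =>
    rw [fillsFrom_cons]
    have h₁ : FillsFrom (m + 1) (m + 1) l ↔ l = [] := by
      rw [← ih 0 (by omega) (m + 1) l]
      simp [fillingLists]
    have h₂ (l' : List ℕ) : ¬ FillsFrom (m + 1) (m + 2) l' := fun h => by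
      have := h.1
      omega
    simp only [fillingLists, h₁, h₂]
    split_ifs with hm <;> simp [hm]
  | r + 2, p :: l =>
    rw [fillsFrom_cons]
    have h₁ := ih (r + 1) (by omega) (m + 1)
    have h₂ := ih r (by omega) (m + 2)
    rw [show m + 1 + (r + 1) = m + (r + 2) by omega] at h₁
    rw [show m + 2 + r = m + (r + 2) by omega] at h₂
    simp only [fillingLists, ← h₁, ← h₂]
    split_ifs with hm <;> simp [hm] <;> grind

theorem card_fillingLists_add_two (r m : ℕ) :
    (fillingLists (r + 2) m).card =
      (if 1 ≤ m then (fillingLists (r + 1) (m + 1)).card else 0) +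
        ((fillingLists (r + 1) (m + 1)).card + (fillingLists r (m + 2)).card) := by
  rw [fillingLists, Finset.card_union_of_disjoint, Finset.card_union_of_disjoint,
    Finset.card_image_of_injective _ (List.cons_injective),
    Finset.card_image_of_injective _ (fun _ _ h => by simpa using h)]
  · split_ifs
    · rw [Finset.card_image_of_injective _ (List.cons_injective)]
    · rfl
  · rw [Finset.disjoint_left]
    simp only [Finset.mem_image]
    grind
  · rw [Finset.disjoint_left]
    split_ifs
    · simp only [Finset.mem_image, Finset.mem_union]
      grind
    · simp

theorem card_fillingLists_eq (r m : ℕ) (hm : 1 ≤ m) :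
    (fillingLists r m).card = (fillingLists r 1).card := by
  induction r using Nat.strong_induction_on generalizing m with
  | _ r ih =>
  match r with
  | 0 => rfl
  | 1 =>
    have h : ∀ a : ℕ, 1 ≤ a → (fillingLists 1 a).card = 2 := by
      intro a ha
      simp [fillingLists, ha]
    rw [h m hm, h 1 le_rfl]
  | r + 2 =>
    rw [card_fillingLists_add_two, card_fillingLists_add_two, if_pos hm, if_pos le_rfl,
      ih (r + 1) (by omega) (m + 1) (by omega), ih (r + 1) (by omega) 2 (by omega),
      ih r (by omega) (m + 2) (by omega), ih r (by omega) (1 + 2) (by omega)]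

theorem mem_VPFup {n : ℕ} {α : Fin n → Fin n} :
    α ∈ VPFup n ↔ FillsFrom n 0 (prefList α) := by
  have hbd : ∀ x ∈ prefList α, 1 ≤ x ∧ 0 ≤ x ∧ x ≤ n := by
    intro x hx
    obtain ⟨i, rfl⟩ := (List.mem_ofFn' _ _).1 hx
    have := (α i).2
    simp
  have hsort : (prefList α).Pairwise (· ≤ ·) ↔ ∀ i j : Fin n, i ≤ j → α i ≤ α j := by
    rw [prefList, List.pairwise_ofFn]
    constructor
    · intro h i j hij
      rcases hij.lt_or_eq with hij | rfl
      · have := h hij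
        simpa using this
      · rfl
    · intro h i j hij
      simpa using h i j hij.le
  have hlen : (prefList α).length + 0 = n := by simp [prefList]
  simp only [VPFup, VPF, VPFk, FillsFrom, Finset.mem_filter, Finset.mem_univ, true_and, hsort,
    hlen]
  simp only [show Finset.Icc 1 0 = (∅ : Finset ℕ) from rfl]
  tauto

theorem card_VPFup (n : ℕ) : (VPFup n).card = (fillingLists n 0).card := by
  refine Finset.card_bij (fun α _ => prefList α) ?_ ?_ ?_
  · intro α hα
    rw [mem_fillingLists, zero_add]
    exact mem_VPFup.1 hα
  · intro α _ β _ h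
    have := List.ofFn_injective h
    funext i
    have := congrFun this i
    exact Fin.ext (by simpa using this)
  · intro l hl
    rw [mem_fillingLists, zero_add] at hl
    obtain ⟨hlen, -, hbd, -⟩ := id hl
    simp only [add_zero] at hlen
    have hb (i : Fin n) := hbd (l[(i : ℕ)]'(by omega)) (List.getElem_mem _)
    have heq : prefList (fun i : Fin n =>
        (⟨l[(i : ℕ)]'(by omega) - 1, by have := hb i; omega⟩ : Fin n)) = l := by
      apply List.ext_getElem
      · simp [prefList, hlen]
      · intro i h₁ h₂
        have := hb ⟨i, by omega⟩
        simp only [prefList, List.getElem_ofFn]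
        simp only at this
        omega
    exact ⟨_, mem_VPFup.2 (by rwa [heq]), heq⟩

theorem card_VPFup_add_two (n : ℕ) :
    (VPFup (n + 2)).card = (fillingLists (n + 1) 1).card + (fillingLists n 1).card := by
  rw [card_VPFup, card_fillingLists_add_two, card_fillingLists_eq n (0 + 2) (by omega)]
  simp

theorem card_fillingLists_one_add_two (r : ℕ) :
    (fillingLists (r + 2) 1).card =
      2 * (fillingLists (r + 1) 1).card + (fillingLists r 1).card := by
  rw [card_fillingLists_add_two, if_pos le_rfl, card_fillingLists_eq (r + 1) (1 + 1) (by omega),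
    card_fillingLists_eq r (1 + 2) (by omega)]
  ring

/-- `|VPF_1^↑| = 1`, `|VPF_2^↑| = 3`, and for `n ≥ 3`,
`|VPF_n^↑| = 2·|VPF_{n-1}^↑| + |VPF_{n-2}^↑|`. -/
theorem vpfup_recurrence :
    (VPFup 1).card = 1 ∧ (VPFup 2).card = 3 ∧
      ∀ n : ℕ, 3 ≤ n →
        (VPFup n).card = 2 * (VPFup (n-1)).card + (VPFup (n-2)).card := by
  have h₀ : (fillingLists 0 1).card = 1 := rfl
  have h₁ : (fillingLists 1 1).card = 2 := rfl
  have hV₁ : (VPFup 1).card = 1 := by rw [card_VPFup]; rfl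
  have hV₂ := card_VPFup_add_two 0
  rw [zero_add, zero_add, h₀, h₁] at hV₂
  refine ⟨hV₁, by omega, fun n hn => ?_⟩
  obtain ⟨n, rfl⟩ := Nat.exists_eq_add_of_le' hn
  change (VPFup (n + 1 + 2)).card = 2 * (VPFup (n + 2)).card + (VPFup (n + 1)).card
  rw [card_VPFup_add_two, card_VPFup_add_two, card_fillingLists_one_add_two]
  cases n with
  | zero => rw [zero_add, hV₁, h₀, h₁]
  | succ n =>
    rw [card_VPFup_add_two, card_fillingLists_one_add_two]
    ring
end

section
/- If β = (b_1,…,b_n) is a non-increasing vacillating parking function of length n (i.e., β ∈ VPF_n and b_1 ≥ b_2 ≥ ⋯ ≥ b_n), then n−i ≤ b_i ≤ n+2−i for all i ∈ [n]. -/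
/-- The set of non-increasing vacillating parking functions of length `n`. -/
def VPFdown (n : ℕ) : Finset (Fin n → Fin n) :=
  (VPF n).filter fun α => ∀ i j : Fin n, i ≤ j → α j ≤ α i

/-- A car preferring a spot of `[n]` that parks does so in a free spot of `[n]`
at distance at most one from its preference. -/
theorem parkStep_one_spec {n p s : ℕ} {occ : Finset ℕ} (hp : 1 ≤ p ∧ p ≤ n)
    (h : parkStep n 1 occ p = some s) :
    s ∉ occ ∧ s ∈ Finset.Icc 1 n ∧ s ≤ p + 1 ∧ p ≤ s + 1 := by
  rw [Finset.mem_Icc]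
  unfold parkStep at h
  split_ifs at h with h₁ h₂ h₃ <;> obtain rfl := Option.some.inj h
  · exact ⟨h₂.2, by omega⟩
  · exact ⟨h₃.2, by omega⟩
  · exact ⟨h₁, by omega⟩

/-- If all cars park, then they park in distinct spots of `[n]`, disjoint from the initially
occupied ones, each at distance at most one from the preference of its car. -/
theorem parkAssign_one_spec {n : ℕ} {ps ss : List ℕ} {occ : Finset ℕ}
    (hps : ∀ p ∈ ps, 1 ≤ p ∧ p ≤ n) (h : parkAssign n 1 occ ps = some ss) :
    ss.Nodup ∧ (∀ s ∈ ss, s ∉ occ) ∧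
      List.Forall₂ (fun p s => s ∈ Finset.Icc 1 n ∧ s ≤ p + 1 ∧ p ≤ s + 1) ps ss := by
  induction ps generalizing occ ss with
  | nil =>
    obtain rfl := Option.some.inj h
    simp
  | cons p ps ih =>
    rw [parkAssign] at h
    split at h
    · simp at h
    · rename_i s hs
      obtain ⟨ts, hts, rfl⟩ := Option.map_eq_some_iff.1 h
      obtain ⟨hocc, hspot⟩ := parkStep_one_spec (hps p (by simp)) hs
      obtain ⟨hnodup, hfree, hnear⟩ := ih (fun q hq => hps q (by simp [hq])) hts
      refine ⟨List.nodup_cons.2 ⟨fun hmem => hfree s hmem (by simp), hnodup⟩, ?_, .cons hspot hnear⟩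
      intro t ht
      rcases List.mem_cons.1 ht with rfl | ht
      · exact hocc
      · exact fun hmem => hfree t ht (Finset.mem_insert_of_mem hmem)

/-- The cars of a vacillating parking function park injectively in spots of `[n]`
at distance at most one from their preferences. -/
theorem exists_injective_near_of_mem_VPF {n : ℕ} {β : Fin n → Fin n} (hβ : β ∈ VPF n) :
    ∃ f : Fin n → ℕ, Function.Injective f ∧
      ∀ i, f i ∈ Finset.Icc 1 n ∧ f i ≤ (β i : ℕ) + 2 ∧ (β i : ℕ) ≤ f i := by
  obtain ⟨ss, hss⟩ := Option.isSome_iff_exists.1 (Finset.mem_filter.1 hβ).2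
  obtain ⟨hnodup, -, hnear⟩ := parkAssign_one_spec (by simp [prefList, Fin.forall_iff]; omega) hss
  obtain ⟨hlen, hget⟩ := List.forall₂_iff_get.1 hnear
  have hlen' : ss.length = n := by simp [← hlen, prefList]
  refine ⟨fun i => ss.get (i.cast hlen'.symm),
    (List.nodup_iff_injective_get.1 hnodup).comp (Fin.cast_injective _), fun i => ?_⟩
  have hi := hget i (by simp [prefList]) (by simp [hlen'])
  simp only [prefList, List.get_ofFn] at hi
  exact ⟨hi.1, hi.2.1, Nat.le_of_succ_le_succ hi.2.2⟩

/-- If `β` is a non-increasing vacillating parking function of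
length `n`, then `n − i ≤ b_i ≤ n + 2 − i` for all `i ∈ [n]`.  Here car `i ∈ [n]`
corresponds to index `i - 1 : Fin n` with (1-indexed) preference `b_i = β (i-1) + 1`,
and the (subtraction-free) claim reads
`n ≤ b_i + i ∧ b_i + i ≤ n + 2` for `i : Fin n` (with `i` 1-indexed as `(i : ℕ) + 1`). -/
theorem nonincreasing_vpf_bounds (n : ℕ) (β : Fin n → Fin n) (hβ : β ∈ VPF n)
    (hanti : ∀ i j : Fin n, i ≤ j → β j ≤ β i) :
    ∀ i : Fin n,
      n ≤ ((β i : ℕ) + 1) + ((i : ℕ) + 1) ∧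
        ((β i : ℕ) + 1) + ((i : ℕ) + 1) ≤ n + 2 := by
  intro i
  obtain ⟨f, hinj, hf⟩ := exists_injective_near_of_mem_VPF hβ
  have hlater : (Finset.Ici i).card ≤ (Finset.Icc 1 ((β i : ℕ) + 2)).card := by
    refine Finset.card_le_card_of_injOn f (fun j hj => ?_) hinj.injOn
    have hj' : (β j : ℕ) ≤ β i := hanti i j (by simpa using hj)
    have := hf j
    simp only [Finset.coe_Icc, Set.mem_Icc, Finset.mem_Icc] at this ⊢
    omega
  have hearlier : (Finset.Iic i).card ≤ (Finset.Icc (β i : ℕ) n).card := by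
    refine Finset.card_le_card_of_injOn f (fun j hj => ?_) hinj.injOn
    have hj' : (β i : ℕ) ≤ β j := hanti j i (by simpa using hj)
    have := hf j
    simp only [Finset.coe_Icc, Set.mem_Icc, Finset.mem_Icc] at this ⊢
    omega
  simp only [Fin.card_Ici, Fin.card_Iic, Nat.card_Icc] at hlater hearlier
  omega
end

section
/- In the ring of formal power series over ℚ, the generating function F(X) = Σ_{n≥1} |VPF_n^↓| X^n of the numbers of non-increasing vacillating parking functions satisfies (1 − 2X − X^3) · F(X) = X + X^2; equivalently, F(X) = −(X^2 + X)/(X^3 + 2X − 1). -/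
theorem parkStep_spec {n : ℕ} {occ : Finset ℕ} {p s : ℕ} (hp : 1 ≤ p) (hpn : p ≤ n)
    (h : parkStep n 1 occ p = some s) : s ∉ occ ∧ 1 ≤ s ∧ s ≤ n ∧ s ≤ p + 1 := by
  unfold parkStep at h
  split_ifs at h <;> simp only [Option.some.injEq] at h <;> subst h <;> grind

theorem isSome_parkAssign_cons {n : ℕ} {occ : Finset ℕ} {p : ℕ} {l : List ℕ} :
    (parkAssign n 1 occ (p :: l)).isSome ↔
      ∃ s, parkStep n 1 occ p = some s ∧ (parkAssign n 1 (insert s occ) l).isSome := by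
  rw [parkAssign]
  cases parkStep n 1 occ p <;> simp

/-- If every preference stays at least two below an empty spot, that spot is never filled, so
fewer than `n` cars park in total. -/
theorem card_add_length_lt_of_unreachable {n s : ℕ} (hs : s ∈ Finset.Icc 1 n) {l : List ℕ} :
    ∀ {occ : Finset ℕ}, occ ⊆ Finset.Icc 1 n → s ∉ occ → (∀ p ∈ l, 1 ≤ p ∧ p + 1 < s) →
      (parkAssign n 1 occ l).isSome → occ.card + l.length < n := by
  induction l with
  | nil =>
    intro occ hocc hsocc _ _
    have := Finset.card_lt_card
      (Finset.ssubset_iff_subset_ne.2 ⟨hocc, fun h => hsocc (h ▸ hs)⟩)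
    simpa using this
  | cons p l ih =>
    intro occ hocc hsocc hl h
    obtain ⟨t, ht, h⟩ := isSome_parkAssign_cons.1 h
    have hp := hl p (by simp)
    rw [Finset.mem_Icc] at hs
    obtain ⟨h1, h2, h3, h4⟩ := parkStep_spec hp.1 (by omega) ht
    have := ih (occ := insert t occ) (by grind) (by grind) (by grind) h
    rw [Finset.card_insert_of_notMem h1] at this
    simp only [List.length_cons]
    omega

/-- `ParksDown n m l` says that the cars with non-increasing preferences `l` fill the street when
exactly the spots `m + 1, …, n` are occupied beforehand. -/
def ParksDown (n m : ℕ) (l : List ℕ) : Prop :=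
  l.length = m ∧ l.Pairwise (· ≥ ·) ∧ (∀ p ∈ l, 1 ≤ p ∧ p ≤ n) ∧
    (parkAssign n 1 (Finset.Icc (m + 1) n) l).isSome

theorem insert_Icc {n m : ℕ} (h : m + 1 ≤ n) :
    insert (m + 1) (Finset.Icc (m + 2) n) = Finset.Icc (m + 1) n := by
  ext x; simp only [Finset.mem_insert, Finset.mem_Icc]; omega

theorem parkStep_Icc_succ {n m : ℕ} (h : m + 2 ≤ n) :
    parkStep n 1 (Finset.Icc (m + 2) n) (m + 2) = some (m + 1) := by
  simp [parkStep, h]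

theorem parkStep_Icc_of_lt {n m p : ℕ} (h : p < m) :
    parkStep n 1 (Finset.Icc m n) p = some p := by
  simp [parkStep, h]

theorem parkStep_Icc_eq_none {n m p : ℕ} (h : m < p) (hp : p ≤ n) :
    parkStep n 1 (Finset.Icc m n) p = none := by
  unfold parkStep
  simp only [Finset.mem_Icc]
  rw [if_neg (by omega), if_neg (by omega), if_neg (by omega)]

theorem ParksDown.le_succ {n m : ℕ} {l : List ℕ} (h : ParksDown n m l) :
    ∀ p ∈ l, p ≤ m + 1 := by
  obtain ⟨-, hs, hb, hp⟩ := h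
  cases l with
  | nil => simp
  | cons q l =>
    obtain ⟨t, ht, -⟩ := isSome_parkAssign_cons.1 hp
    have hq : q ≤ m + 1 := by
      by_contra hq
      rw [parkStep_Icc_eq_none (by omega) (hb q (by simp)).2] at ht
      cases ht
    rw [List.pairwise_cons] at hs
    grind

theorem isSome_parkAssign_one_one {n : ℕ} (hn : 2 ≤ n) :
    (parkAssign n 1 (Finset.Icc 3 n) [1, 1]).isSome := by
  simp [parkAssign, parkStep, hn]

theorem isSome_parkAssign_triple {n k : ℕ} {l : List ℕ} (hn : k + 3 ≤ n) :
    (parkAssign n 1 (Finset.Icc (k + 4) n) ((k + 2) :: (k + 2) :: (k + 2) :: l)).isSome ↔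
      (parkAssign n 1 (Finset.Icc (k + 1) n) l).isSome := by
  have h1 : parkStep n 1 (Finset.Icc (k + 4) n) (k + 2) = some (k + 2) :=
    parkStep_Icc_of_lt (by omega)
  have h2 : parkStep n 1 (insert (k + 2) (Finset.Icc (k + 4) n)) (k + 2) = some (k + 1) := by
    simp [parkStep]
  have h3 : parkStep n 1 (insert (k + 1) (insert (k + 2) (Finset.Icc (k + 4) n))) (k + 2) =
      some (k + 3) := by
    simp [parkStep, hn]
  have h4 : insert (k + 3) (insert (k + 1) (insert (k + 2) (Finset.Icc (k + 4) n))) =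
      Finset.Icc (k + 1) n := by
    ext x; simp only [Finset.mem_insert, Finset.mem_Icc]; omega
  simp [isSome_parkAssign_cons, h1, h2, h3, h4]

/-- If the spots `1, …, m + 1` are free and a non-increasing list that fills them starts with
`p ≤ m`, then `p = m`, and `m` is repeated until spot `m + 1` is filled. -/
theorem eq_one_or_triple_of_isSome {n m p : ℕ} {l : List ℕ} (hm : m + 1 ≤ n) (hp : 1 ≤ p)
    (hpm : p ≤ m) (hlen : l.length = m) (hs : (p :: l).Pairwise (· ≥ ·))
    (hb : ∀ q ∈ l, 1 ≤ q)
    (h : (parkAssign n 1 (Finset.Icc (m + 2) n) (p :: l)).isSome) :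
    p = m ∧ ((m = 1 ∧ l = [1]) ∨ ∃ k l', m = k + 2 ∧ l = m :: m :: l' ∧ l'.length = k) := by
  obtain ⟨t, ht, h⟩ := isSome_parkAssign_cons.1 h
  rw [parkStep_Icc_of_lt (by omega), Option.some.injEq] at ht
  subst ht
  have hspot : m + 1 ∈ Finset.Icc 1 n := by simp [hm]
  rw [List.pairwise_cons] at hs
  have hcard : (insert p (Finset.Icc (m + 2) n)).card = n - m := by
    rw [Finset.card_insert_of_notMem (by simp; omega), Nat.card_Icc]; omega
  have hsub : insert p (Finset.Icc (m + 2) n) ⊆ Finset.Icc 1 n := by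
    intro x; simp only [Finset.mem_insert, Finset.mem_Icc]; omega
  have hfree : m + 1 ∉ insert p (Finset.Icc (m + 2) n) := by simp; omega
  have hpm' : p = m := by
    by_contra hne
    have := card_add_length_lt_of_unreachable hspot hsub hfree (by grind) h
    omega
  subst hpm'
  refine ⟨rfl, ?_⟩
  obtain _ | ⟨q, l⟩ := l
  · simp at hlen; omega
  have hql := (List.pairwise_cons.1 hs.2).1
  have hqp : q = p := by
    by_contra hne
    have := card_add_length_lt_of_unreachable hspot hsub hfree (by grind) h
    omega
  subst hqp
  obtain rfl | hq := hp.eq_or_lt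
  · left
    simpa using hlen
  right
  obtain ⟨k, rfl⟩ : ∃ k, q = k + 2 := ⟨q - 2, by omega⟩
  obtain ⟨t, ht, h⟩ := isSome_parkAssign_cons.1 h
  have ht' : t = k + 1 := by
    have : parkStep n 1 (insert (k + 2) (Finset.Icc (k + 2 + 2) n)) (k + 2) = some (k + 1) := by
      simp [parkStep]
    grind
  subst ht'
  obtain _ | ⟨r, l⟩ := l
  · simp at hlen
  have hrl := (List.pairwise_cons.1 (List.pairwise_cons.1 hs.2).2).1
  have hr : r = k + 2 := by
    by_contra hne
    have := card_add_length_lt_of_unreachable hspot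
      (occ := insert (k + 1) (insert (k + 2) (Finset.Icc (k + 2 + 2) n))) (by grind)
      (by simp) (by grind) h
    rw [Finset.card_insert_of_notMem (by simp), hcard] at this
    simp at hlen this
    omega
  subst hr
  exact ⟨k, l, rfl, rfl, by simpa using hlen⟩

theorem parksDown_cons {n m p : ℕ} {l : List ℕ} (hm : m + 1 ≤ n) :
    ParksDown n (m + 1) (p :: l) ↔
      ((p = m + 2 ∧ m + 2 ≤ n ∨ p = m + 1) ∧ ParksDown n m l) ∨
      (p = 1 ∧ m = 1 ∧ l = [1]) ∨
      ∃ k l', m = k + 2 ∧ p = k + 2 ∧ l = (k + 2) :: (k + 2) :: l' ∧ ParksDown n k l' := by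
  constructor
  · intro h
    have hle := h.le_succ p (by simp)
    obtain ⟨hlen, hs, hb, hp⟩ := h
    have hpb := hb p (by simp)
    have hlen' : l.length = m := by simpa using hlen
    by_cases hpm : p ≤ m
    · right
      obtain ⟨rfl, ⟨rfl, rfl⟩ | ⟨k, l', rfl, rfl, hk⟩⟩ :=
        eq_one_or_triple_of_isSome hm hpb.1 hpm hlen' hs (by grind) hp
      · simp
      · refine .inr ⟨k, l', rfl, rfl, rfl, hk, ?_, by grind, ?_⟩
        · simp only [List.pairwise_cons] at hs
          exact hs.2.2.2
        · exact (isSome_parkAssign_triple hm).1 hp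
    · left
      refine ⟨by omega, hlen', (List.pairwise_cons.1 hs).2, by grind, ?_⟩
      obtain ⟨t, ht, hp⟩ := isSome_parkAssign_cons.1 hp
      have : t = m + 1 := by
        obtain rfl | rfl : p = m + 2 ∨ p = m + 1 := by omega
        · rw [parkStep_Icc_succ hpb.2] at ht; grind
        · rw [parkStep_Icc_of_lt (by omega)] at ht; grind
      rwa [this, insert_Icc hm] at hp
  · rintro (⟨hp, h⟩ | ⟨rfl, rfl, rfl⟩ | ⟨k, l', rfl, rfl, rfl, h⟩)
    · have hle := h.le_succ
      obtain ⟨hlen, hs, hb, h⟩ := h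
      refine ⟨by simp [hlen], List.pairwise_cons.2 ⟨by grind, hs⟩, by grind, ?_⟩
      refine isSome_parkAssign_cons.2 ⟨m + 1, ?_, by rwa [insert_Icc hm]⟩
      obtain ⟨rfl, h2⟩ | rfl := hp
      · exact parkStep_Icc_succ h2
      · exact parkStep_Icc_of_lt (by omega)
    · exact ⟨rfl, by simp, by simp; omega, isSome_parkAssign_one_one hm⟩
    · have hle := h.le_succ
      obtain ⟨hlen, hs, hb, h⟩ := h
      refine ⟨by simp [hlen], ?_, by grind, (isSome_parkAssign_triple hm).2 h⟩
      simp only [List.pairwise_cons]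
      grind

/-- The non-increasing lists that fill the free spots `1, …, m` of a street with at least `m + 1`
spots. -/
def fillings : ℕ → Finset (List ℕ)
  | 0 => {[]}
  | 1 => {[1], [2]}
  | 2 => {[3, 1], [3, 2], [2, 1], [2, 2], [1, 1]}
  | m + 3 => (fillings (m + 2)).image (List.cons (m + 4)) ∪
      (fillings (m + 2)).image (List.cons (m + 3)) ∪
      (fillings m).image ([m + 2, m + 2, m + 2] ++ ·)

theorem cons_mem_fillings {m p : ℕ} {l : List ℕ} :
    p :: l ∈ fillings (m + 1) ↔
      ((p = m + 2 ∨ p = m + 1) ∧ l ∈ fillings m) ∨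
      (p = 1 ∧ m = 1 ∧ l = [1]) ∨
      ∃ k l', m = k + 2 ∧ p = k + 2 ∧ l = (k + 2) :: (k + 2) :: l' ∧ l' ∈ fillings k := by
  match m with
  | 0 => simp [fillings]; grind
  | 1 => simp [fillings]; grind
  | m + 2 =>
    rw [fillings]
    simp
    grind

theorem nil_mem_fillings_iff {m : ℕ} : [] ∈ fillings m ↔ m = 0 := by
  match m with
  | 0 | 1 | 2 | m + 3 => simp [fillings]

theorem le_of_mem_fillings {m : ℕ} : ∀ {l : List ℕ}, l ∈ fillings m → ∀ p ∈ l, p ≤ m + 1 := by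
  induction m using Nat.strong_induction_on with
  | _ m ih =>
    intro l hl
    match l, m with
    | [], _ => simp
    | p :: l, 0 => simp [fillings] at hl
    | p :: l, m + 1 =>
      have hle : ∀ k ≤ m, ∀ l' ∈ fillings k, ∀ p ∈ l', p ≤ k + 1 := fun k hk l' h =>
        ih k (by omega) h
      obtain ⟨hp, hl⟩ | ⟨rfl, rfl, rfl⟩ | ⟨k, l', rfl, rfl, rfl, hl'⟩ :=
        cons_mem_fillings.1 hl
      · have := hle m le_rfl l hl
        grind
      · simp
      · have := hle k (by omega) l' hl'
        grind

theorem parksDown_iff_mem_fillings {n m : ℕ} (hm : m ≤ n) {l : List ℕ} :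
    ParksDown n m l ↔ l ∈ fillings m ∧ ∀ p ∈ l, p ≤ n := by
  induction m using Nat.strong_induction_on generalizing l with
  | _ m ih =>
    match l, m with
    | [], m =>
      rw [nil_mem_fillings_iff]
      simp [ParksDown, parkAssign, eq_comm]
    | p :: l, 0 => simp [fillings, ParksDown]
    | p :: l, m + 1 =>
      rw [parksDown_cons hm, cons_mem_fillings, ih m (by omega) (by omega)]
      have key : ∀ k l', m = k + 2 → (ParksDown n k l' ↔ l' ∈ fillings k ∧ ∀ p ∈ l', p ≤ n) :=
        fun k l' hk => ih k (by omega) (by omega)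
      grind

theorem cons_image_disjoint {a b : ℕ} (hab : a ≠ b) (s t : Finset (List ℕ)) :
    Disjoint (s.image (List.cons a)) (t.image (List.cons b)) := by
  rw [Finset.disjoint_left]
  simp only [Finset.mem_image]
  rintro _ ⟨x, -, rfl⟩ ⟨y, -, h⟩
  exact hab (List.cons.inj h).1.symm

theorem card_fillings_add_three (m : ℕ) :
    (fillings (m + 3)).card = 2 * (fillings (m + 2)).card + (fillings m).card := by
  have himage : (fillings m).image ([m + 2, m + 2, m + 2] ++ ·) =
      ((fillings m).image ([m + 2, m + 2] ++ ·)).image (List.cons (m + 2)) := by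
    rw [Finset.image_image]; rfl
  rw [fillings, Finset.card_union_of_disjoint, Finset.card_union_of_disjoint,
    Finset.card_image_of_injective _ List.cons_injective,
    Finset.card_image_of_injective _ List.cons_injective,
    Finset.card_image_of_injective _ (List.append_right_injective _), two_mul]
  · exact cons_image_disjoint (by omega) _ _
  · rw [himage, Finset.disjoint_union_left]
    exact ⟨cons_image_disjoint (by omega) _ _, cons_image_disjoint (by omega) _ _⟩

theorem card_VPFdown_eq (n : ℕ) :
    (VPFdown n).card = ((fillings n).filter fun l => ∀ p ∈ l, p ≤ n).card := by
  refine Finset.card_bij (fun α _ => prefList α) ?_ ?_ ?_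
  · intro α hα
    simp only [VPFdown, VPF, VPFk, Finset.mem_filter, Finset.mem_univ, true_and] at hα
    rw [Finset.mem_filter, ← parksDown_iff_mem_fillings le_rfl]
    refine ⟨by simp [prefList], ?_, ?_, by simpa using hα.1⟩
    · rw [prefList, List.pairwise_ofFn]
      intro i j hij
      simpa using hα.2 i j hij.le
    · simp only [prefList, List.mem_ofFn]
      rintro _ ⟨i, rfl⟩
      omega
  · intro α _ β _ h
    have := List.ofFn_injective h
    ext i
    simpa using congrFun this i
  · intro l hl
    rw [Finset.mem_filter, ← parksDown_iff_mem_fillings le_rfl] at hl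
    obtain ⟨hlen, hs, hb, hp⟩ := hl
    subst hlen
    have hbd : ∀ i : Fin l.length, 1 ≤ l[i] ∧ l[i] ≤ l.length := fun i =>
      hb _ (List.getElem_mem _)
    have heq : prefList (fun i : Fin l.length =>
        (⟨l[i] - 1, by have := hbd i; omega⟩ : Fin l.length)) = l := by
      apply List.ext_getElem
      · simp [prefList]
      · intro i h1 h2
        have := hbd ⟨i, h2⟩
        simp [prefList] at this ⊢
        omega
    refine ⟨_, ?_, heq⟩
    simp only [VPFdown, VPF, VPFk, Finset.mem_filter, Finset.mem_univ, true_and]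
    refine ⟨by rw [heq]; simpa using hp, fun i j hij => ?_⟩
    obtain rfl | hij := hij.eq_or_lt
    · exact le_rfl
    · have := List.pairwise_iff_getElem.1 hs i j i.2 j.2 hij
      simp only [Fin.mk_le_mk, Fin.getElem_fin]
      omega

theorem card_VPFdown_add (n : ℕ) :
    (VPFdown (n + 1)).card + (fillings n).card = (fillings (n + 1)).card := by
  rw [card_VPFdown_eq, ← Finset.card_filter_add_card_filter_not (s := fillings (n + 1))
    (fun l => ∀ p ∈ l, p ≤ n + 1), ← Finset.card_image_of_injective (fillings n)
      (List.cons_injective (a := n + 2))]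
  congr 2
  ext l
  match l with
  | [] => simp
  | p :: l =>
    rw [Finset.mem_filter, cons_mem_fillings]
    simp only [Finset.mem_image, List.cons.injEq]
    constructor
    · rintro ⟨_, hl, rfl, rfl⟩
      exact ⟨.inl ⟨.inl rfl, hl⟩, fun h => by simpa using h (n + 2) (by simp)⟩
    · rintro ⟨⟨rfl | rfl, hl⟩ | ⟨rfl, rfl, rfl⟩ | ⟨k, l', rfl, rfl, rfl, hl⟩, h⟩
      · exact ⟨l, hl, rfl, rfl⟩
      · have := le_of_mem_fillings hl
        grind
      · simp at h
      · have := le_of_mem_fillings hl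
        grind

/-- In `ℚ⟦X⟧`, the generating function
`F(X) = ∑_{n ≥ 1} |VPF_n^↓| Xⁿ` satisfies `(1 − 2X − X³)·F(X) = X + X²`. -/
theorem vpfdown_generating_function :
    (1 - 2 * PowerSeries.X - PowerSeries.X ^ 3) *
        PowerSeries.mk (fun n => if n = 0 then (0 : ℚ) else ((VPFdown n).card : ℚ)) =
      PowerSeries.X + PowerSeries.X ^ 2 := by
  have h1 : (VPFdown 1).card = 1 := by
    have := card_VPFdown_add 0; simpa [fillings] using this
  have h2 : (VPFdown 2).card = 3 := by
    have := card_VPFdown_add 1; simpa [fillings] using this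
  have h3 : (VPFdown 3).card = 6 := by
    have := card_VPFdown_add 2
    rw [card_fillings_add_three] at this
    simp [fillings] at this
    omega
  have hrec (n : ℕ) : (VPFdown (n + 4)).card =
      2 * (VPFdown (n + 3)).card + (VPFdown (n + 1)).card := by
    have e1 := card_VPFdown_add n
    have e3 : (VPFdown (n + 3)).card + (fillings (n + 2)).card = (fillings (n + 3)).card :=
      card_VPFdown_add (n + 2)
    have e4 : (VPFdown (n + 4)).card + (fillings (n + 3)).card = (fillings (n + 4)).card :=
      card_VPFdown_add (n + 3)
    have g3 := card_fillings_add_three n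
    have g4 : (fillings (n + 4)).card = 2 * (fillings (n + 3)).card + (fillings (n + 1)).card :=
      card_fillings_add_three (n + 1)
    omega
  have hexpand (F : PowerSeries ℚ) : (1 - 2 * PowerSeries.X - PowerSeries.X ^ 3) * F =
      F - PowerSeries.X * F - PowerSeries.X * F
        - PowerSeries.X * (PowerSeries.X * (PowerSeries.X * F)) := by ring
  rw [hexpand]
  ext n
  match n with
  | 0 => simp
  | 1 => simp [PowerSeries.coeff_succ_X_mul, PowerSeries.coeff_X_pow, h1]
  | 2 =>
    norm_num [PowerSeries.coeff_succ_X_mul, PowerSeries.coeff_X_pow, PowerSeries.coeff_X, h1, h2]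
  | 3 =>
    norm_num [PowerSeries.coeff_succ_X_mul, PowerSeries.coeff_X_pow, PowerSeries.coeff_X, h2, h3]
  | n + 4 =>
    simp [PowerSeries.coeff_succ_X_mul, PowerSeries.coeff_X_pow, PowerSeries.coeff_X, hrec n]
    ring
end
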